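/- Let θ̂ ~ N(0, I₂), a₁, a₂ > 0 with a₁² + a₂² = 1, b ≤ 0, z = z_{1−α/2}. Define LB(θ₂) = max(a₁a₂⁻¹(θ₂ + a₂⁻¹b) − a₂⁻¹z, −z) and UB(θ₂) = max(a₁a₂⁻¹(θ₂ + a₂⁻¹b) + a₂⁻¹z, z). Then P(LB(θ̂₂) ≤ θ̂₁ ≤ UB(θ̂₂)) ≥ 1 − α, with equality when b = 0. -/

import Mathlib

open MeasureTheory ProbabilityTheory

/-- Standard normal CDF. -/
noncomputable def stdNormalCDF (t : ℝ) : ℝ :=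
  ((gaussianReal 0 1) (Set.Iic t)).toReal

/-!
Put `u = θ₁` and `v = a₂ θ₁ - a₁ θ₂`, two linear forms with unit coefficient vectors. The interval
covers exactly when `-z ≤ u` and `-z - δ ≤ v`, but not both `z < u` and `z - δ < v`, where
`δ = -a₁ b / a₂ ≥ 0`. As the law is symmetric about the origin, the coverage probability is
`P(-z ≤ u, -z - δ ≤ v) - P(u < -z, v < -z + δ)`. For `δ = 0`, exchanging `u` and `v` turns this into
`P(-z ≤ u) - P(u < -z) = P(|u| ≤ z)`. Moving from `0` to `δ` gains `P(-z ≤ u, -z - δ ≤ v < -z)` and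
loses `P(u < -z, -z ≤ v < -z + δ)`. After exchanging `u` and `v` in the loss, the two events share a
rectangle, and reflection in the hyperplane `u + v = -2z` carries the rest of the loss into the
gain, closer to the origin, where a radially decreasing density is larger.
-/

open Set Function
open scoped ENNReal NNReal RealInnerProductSpace

section RadiallyDecreasing

variable {E : Type*} [NormedAddCommGroup E] [InnerProductSpace ℝ E]

/-- The reflection of `E` in the affine hyperplane `⟪n, w⟫ = c`, which moves points of
the half-space `⟪n, w⟫ ≤ c` towards the origin when `c ≤ 0`; it is the identity when `n = 0`. -/
noncomputable def hyperplaneReflection (n : E) (c : ℝ) (w : E) : E :=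
  w - (2 * (⟪n, w⟫ - c) / ‖n‖ ^ 2) • n

lemma norm_hyperplaneReflection_le {n w : E} {c : ℝ} (hc : c ≤ 0) (hw : ⟪n, w⟫ ≤ c) :
    ‖hyperplaneReflection n c w‖ ≤ ‖w‖ := by
  rcases eq_or_ne n 0 with rfl | hn
  · simp [hyperplaneReflection]
  have hsq : ‖hyperplaneReflection n c w‖ ^ 2 =
      ‖w‖ ^ 2 - 4 * (-c) * (c - ⟪n, w⟫) / ‖n‖ ^ 2 := by
    rw [hyperplaneReflection, norm_sub_sq_real, norm_smul, real_inner_smul_right,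
      real_inner_comm, mul_pow, Real.norm_eq_abs, sq_abs]
    field_simp
    ring
  have hgain : 0 ≤ 4 * (-c) * (c - ⟪n, w⟫) / ‖n‖ ^ 2 :=
    div_nonneg (mul_nonneg (by linarith) (by linarith)) (sq_nonneg _)
  exact le_of_sq_le_sq (by linarith) (norm_nonneg w)

variable [FiniteDimensional ℝ E] [MeasurableSpace E] [BorelSpace E]

lemma measurePreserving_hyperplaneReflection (n : E) (c : ℝ) :
    MeasurePreserving (hyperplaneReflection n c) := by
  have hcomp : hyperplaneReflection n c =
      (· + (2 * c / ‖n‖ ^ 2) • n) ∘ (ℝ ∙ n)ᗮ.reflection := by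
    ext w
    simp only [hyperplaneReflection, comp_apply, Submodule.reflection_orthogonal_apply,
      Submodule.reflection_singleton_apply, RCLike.ofReal_real_eq_id, id_eq]
    module
  rw [hcomp]
  exact (measurePreserving_add_right volume _).comp (LinearIsometryEquiv.measurePreserving _)

/-- A measure is radially decreasing if it has a density that is a nonincreasing function of the
norm; this is the property of the standard Gaussian law that the coverage bound rests on. The norm
is taken in `ℝ≥0` so that `Antitone` constrains the profile only where it is evaluated. -/
def IsRadiallyDecreasing (μ : Measure E) : Prop :=
  ∃ f : ℝ≥0 → ℝ≥0∞, Antitone f ∧ μ = volume.withDensity fun w ↦ f ‖w‖₊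

namespace IsRadiallyDecreasing

variable {μ : Measure E}

lemma measure_preimage_le (hμ : IsRadiallyDecreasing μ) {T : E → E} (hT : MeasurePreserving T)
    {S : Set E} (hS : MeasurableSet S) (hnorm : ∀ w ∈ T ⁻¹' S, ‖T w‖ ≤ ‖w‖) :
    μ (T ⁻¹' S) ≤ μ S := by
  obtain ⟨f, hf, rfl⟩ := hμ
  have hdens : Measurable fun w : E ↦ f ‖w‖₊ := hf.measurable.comp measurable_nnnorm
  rw [withDensity_apply _ hS, withDensity_apply _ (hT.measurable hS),
    ← hT.setLIntegral_comp_preimage hS hdens]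
  exact setLIntegral_mono (hdens.comp hT.measurable) fun w hw ↦ hf (hnorm w hw)

lemma measurePreserving_linearIsometryEquiv (hμ : IsRadiallyDecreasing μ) (L : E ≃ₗᵢ[ℝ] E) :
    MeasurePreserving L μ μ := by
  refine ⟨L.continuous.measurable, Measure.ext fun S hS ↦ ?_⟩
  have hLS : MeasurableSet (L ⁻¹' S) := L.continuous.measurable hS
  rw [Measure.map_apply L.continuous.measurable hS]
  refine le_antisymm (hμ.measure_preimage_le L.measurePreserving hS fun w _ ↦ (L.norm_map w).le) ?_
  have hsymm := hμ.measure_preimage_le L.symm.measurePreserving hLS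
    fun w _ ↦ (L.symm.norm_map w).le
  rwa [← preimage_comp, ← LinearIsometryEquiv.coe_trans, L.symm_trans_self] at hsymm

lemma measure_preimage_hyperplaneReflection_le (hμ : IsRadiallyDecreasing μ) {n : E} {c : ℝ}
    (hc : c ≤ 0) {S : Set E} (hS : MeasurableSet S)
    (hside : ∀ w ∈ hyperplaneReflection n c ⁻¹' S, ⟪n, w⟫ ≤ c) :
    μ (hyperplaneReflection n c ⁻¹' S) ≤ μ S :=
  hμ.measure_preimage_le (measurePreserving_hyperplaneReflection n c) hS
    fun w hw ↦ norm_hyperplaneReflection_le hc (hside w hw)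

lemma ae_inner_ne (hμ : IsRadiallyDecreasing μ) {n : E} (hn : n ≠ 0) (k : ℝ) :
    ∀ᵐ w ∂μ, ⟪n, w⟫ ≠ k := by
  obtain ⟨f, -, rfl⟩ := hμ
  have hsurj : Surjective (innerₗ E n) :=
    LinearMap.surjective (by simpa [LinearMap.ext_iff] using ⟨n, by simpa using hn⟩)
  exact (withDensity_absolutelyContinuous _ _).ae_le <|
    (ae_comp_linearMap_mem_iff (innerₗ E n) volume volume hsurj (s := {k}ᶜ)
      (measurableSet_singleton k).compl).2 (Measure.ae_ne volume k)

end IsRadiallyDecreasing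

end RadiallyDecreasing

section InnerPair

variable {E : Type*} [NormedAddCommGroup E] [InnerProductSpace ℝ E] {e f : E}

/-- The pair of linear forms `⟪e, ·⟫` and `⟪f, ·⟫`, the coordinates in which the coverage event is
described. The vectors `e` and `f` need not be orthogonal. -/
def innerPair (e f : E) (w : E) : ℝ × ℝ :=
  (⟪e, w⟫, ⟪f, w⟫)

/-- The reflection of the plane in the line `p.1 + p.2 = 2 * k`: the effect of
`hyperplaneReflection (e + f) (2 * k)` on the coordinates `innerPair e f` when `‖e‖ = ‖f‖`. -/
def antidiagonalReflection (k : ℝ) (p : ℝ × ℝ) : ℝ × ℝ :=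
  (2 * k - p.2, 2 * k - p.1)

lemma semiconj_innerPair_swap (hnorm : ‖e‖ = ‖f‖) :
    Semiconj (innerPair e f) (ℝ ∙ (e - f))ᗮ.reflection Prod.swap := by
  intro w
  have hef : (ℝ ∙ (e - f))ᗮ.reflection e = f := Submodule.reflection_sub hnorm
  have hfe : (ℝ ∙ (e - f))ᗮ.reflection f = e := by
    simpa only [hef] using Submodule.reflection_reflection (ℝ ∙ (e - f))ᗮ e
  have hself (v : E) : ⟪v, (ℝ ∙ (e - f))ᗮ.reflection w⟫ = ⟪(ℝ ∙ (e - f))ᗮ.reflection v, w⟫ := by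
    rw [LinearIsometryEquiv.inner_map_eq_flip, Submodule.reflection_symm]
  simp only [innerPair, hself, hef, hfe, Prod.swap_prod_mk]

lemma semiconj_innerPair_antidiagonalReflection (hnorm : ‖e‖ = ‖f‖) (hef : e + f ≠ 0) (k : ℝ) :
    Semiconj (innerPair e f) (hyperplaneReflection (e + f) (2 * k))
      (antidiagonalReflection k) := by
  intro w
  have he : ⟪e, e + f⟫ = ‖e + f‖ ^ 2 / 2 := by
    rw [norm_add_sq_real, inner_add_right, real_inner_self_eq_norm_sq, ← hnorm]
    ring
  have hf : ⟪f, e + f⟫ = ‖e + f‖ ^ 2 / 2 := by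
    rw [norm_add_sq_real, inner_add_right, real_inner_self_eq_norm_sq, hnorm, real_inner_comm]
    ring
  simp only [innerPair, hyperplaneReflection, antidiagonalReflection, inner_sub_right,
    real_inner_smul_right, he, hf, inner_add_left]
  ext <;> field_simp <;> ring

variable [MeasurableSpace E] [BorelSpace E]

lemma measurable_innerPair (e f : E) : Measurable (innerPair e f) :=
  ((innerSL ℝ e).continuous.prodMk (innerSL ℝ f).continuous).measurable

namespace IsRadiallyDecreasing

variable [FiniteDimensional ℝ E] {μ : Measure E}

lemma measurePreserving_swap (hμ : IsRadiallyDecreasing μ) (hnorm : ‖e‖ = ‖f‖) :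
    MeasurePreserving Prod.swap (μ.map (innerPair e f)) (μ.map (innerPair e f)) :=
  .of_semiconj ((measurable_innerPair e f).measurePreserving μ)
    (hμ.measurePreserving_linearIsometryEquiv _) (semiconj_innerPair_swap hnorm) measurable_swap

lemma measurePreserving_neg (hμ : IsRadiallyDecreasing μ) (e f : E) :
    MeasurePreserving Neg.neg (μ.map (innerPair e f)) (μ.map (innerPair e f)) :=
  .of_semiconj ((measurable_innerPair e f).measurePreserving μ)
    (hμ.measurePreserving_linearIsometryEquiv (.neg ℝ))
    (fun w ↦ by simp [innerPair]) measurable_neg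

lemma map_innerPair_preimage_antidiagonalReflection_le (hμ : IsRadiallyDecreasing μ)
    (hnorm : ‖e‖ = ‖f‖) (hef : e + f ≠ 0) {k : ℝ} (hk : k ≤ 0) {S : Set (ℝ × ℝ)}
    (hS : MeasurableSet S) (hside : ∀ p ∈ antidiagonalReflection k ⁻¹' S, p.1 + p.2 ≤ 2 * k) :
    μ.map (innerPair e f) (antidiagonalReflection k ⁻¹' S) ≤ μ.map (innerPair e f) S := by
  have hmeas := measurable_innerPair e f
  have hrefl : Measurable (antidiagonalReflection k) := by
    unfold antidiagonalReflection
    fun_prop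
  have hpre : innerPair e f ⁻¹' (antidiagonalReflection k ⁻¹' S) =
      hyperplaneReflection (e + f) (2 * k) ⁻¹' (innerPair e f ⁻¹' S) := by
    rw [← preimage_comp, ← preimage_comp,
      (semiconj_innerPair_antidiagonalReflection hnorm hef k).comp_eq]
  rw [Measure.map_apply hmeas (hrefl hS), Measure.map_apply hmeas hS, hpre]
  refine hμ.measure_preimage_hyperplaneReflection_le (by linarith) (hmeas hS) fun w hw ↦ ?_
  rw [← hpre] at hw
  rw [inner_add_left]
  exact hside _ hw

lemma ae_map_innerPair_snd_ne (hμ : IsRadiallyDecreasing μ) (e : E) (hf : f ≠ 0) (k : ℝ) :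
    ∀ᵐ p ∂μ.map (innerPair e f), p.2 ≠ k :=
  (ae_map_iff (measurable_innerPair e f).aemeasurable
    (measurableSet_eq_fun measurable_snd measurable_const).compl).2 (hμ.ae_inner_ne hf k)

end IsRadiallyDecreasing

end InnerPair

section Coverage

lemma measureReal_prod_union {α β : Type*} [MeasurableSpace α] [MeasurableSpace β]
    {ρ : Measure (α × β)} [IsFiniteMeasure ρ] {s : Set α} {t₁ t₂ : Set β} (hs : MeasurableSet s)
    (ht₂ : MeasurableSet t₂) (hd : Disjoint t₁ t₂) :
    ρ.real (s ×ˢ (t₁ ∪ t₂)) = ρ.real (s ×ˢ t₁) + ρ.real (s ×ˢ t₂) := by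
  rw [prod_union, measureReal_union (hd.set_prod_right s s) (hs.prod ht₂)]

lemma measureReal_union_prod {α β : Type*} [MeasurableSpace α] [MeasurableSpace β]
    {ρ : Measure (α × β)} [IsFiniteMeasure ρ] {s₁ s₂ : Set α} {t : Set β} (hs₂ : MeasurableSet s₂)
    (ht : MeasurableSet t) (hd : Disjoint s₁ s₂) :
    ρ.real ((s₁ ∪ s₂) ×ˢ t) = ρ.real (s₁ ×ˢ t) + ρ.real (s₂ ×ˢ t) := by
  rw [union_prod, measureReal_union (hd.set_prod_left t t) (hs₂.prod ht)]

lemma measureReal_swap_prod {α : Type*} [MeasurableSpace α] {ρ : Measure (α × α)}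
    (hswap : MeasurePreserving Prod.swap ρ ρ) {s t : Set α} (hs : MeasurableSet s)
    (ht : MeasurableSet t) : ρ.real (s ×ˢ t) = ρ.real (t ×ˢ s) := by
  rw [← hswap.measureReal_preimage (hs.prod ht).nullMeasurableSet, preimage_swap_prod]

/-- The coverage event in the coordinates `p = (θ.1, a₂ * θ.1 - a₁ * θ.2)`, with
`δ = -(a₁ * a₂⁻¹ * b)`: the quadrant allowed by the lower bound, without the quadrant excluded by
the upper bound. -/
def coverageRegion (z δ : ℝ) : Set (ℝ × ℝ) :=
  (Ici (-z) ×ˢ Ici (-z - δ)) \ (Ioi z ×ˢ Ioi (z - δ))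

lemma measurableSet_coverageRegion (z δ : ℝ) : MeasurableSet (coverageRegion z δ) :=
  (measurableSet_Ici.prod measurableSet_Ici).diff (measurableSet_Ioi.prod measurableSet_Ioi)

variable {ν : Measure (ℝ × ℝ)} [IsFiniteMeasure ν]

lemma measureReal_coverageRegion (hneg : MeasurePreserving Neg.neg ν ν) {z : ℝ} (hz : 0 ≤ z)
    (δ : ℝ) :
    ν.real (coverageRegion z δ) =
      ν.real (Ici (-z) ×ˢ Ici (-z - δ)) - ν.real (Iio (-z) ×ˢ Iio (-z + δ)) := by
  have hpre : Neg.neg ⁻¹' (Ioi z ×ˢ Ioi (z - δ)) = Iio (-z) ×ˢ Iio (-z + δ) := by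
    ext p
    simp only [mem_preimage, mem_prod, mem_Ioi, mem_Iio, Prod.fst_neg, Prod.snd_neg]
    grind
  have hsub : Ioi z ×ˢ Ioi (z - δ) ⊆ Ici (-z) ×ˢ Ici (-z - δ) :=
    prod_mono (Ioi_subset_Ici (by linarith)) (Ioi_subset_Ici (by linarith))
  have hmeas : MeasurableSet (Ioi z ×ˢ Ioi (z - δ)) := measurableSet_Ioi.prod measurableSet_Ioi
  rw [coverageRegion, measureReal_sdiff hsub hmeas, ← hpre,
    hneg.measureReal_preimage hmeas.nullMeasurableSet]

lemma measureReal_coverageRegion_zero (hswap : MeasurePreserving Prod.swap ν ν)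
    (hneg : MeasurePreserving Neg.neg ν ν) {z : ℝ} (hz : 0 ≤ z) :
    ν.real (coverageRegion z 0) = ν.real {p | |p.1| ≤ z} := by
  have hband : ν.real {p | |p.1| ≤ z} = ν.real (Ici (-z) ×ˢ univ) - ν.real (Iio (-z) ×ˢ univ) := by
    have hset : {p : ℝ × ℝ | |p.1| ≤ z} = (Ici (-z) ×ˢ univ) \ (Ioi z ×ˢ univ) := by
      ext p
      simp [abs_le]
    have hpre : Neg.neg ⁻¹' (Ioi z ×ˢ (univ : Set ℝ)) = Iio (-z) ×ˢ univ := by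
      ext p
      simp
    rw [hset, measureReal_sdiff (prod_mono_left (Ioi_subset_Ici (by linarith)))
      (measurableSet_Ioi.prod .univ), ← hpre,
      hneg.measureReal_preimage (measurableSet_Ioi.prod .univ).nullMeasurableSet]
  have hsplit {s : Set ℝ} (hs : MeasurableSet s) :
      ν.real (s ×ˢ univ) = ν.real (s ×ˢ Iio (-z)) + ν.real (s ×ˢ Ici (-z)) := by
    rw [← measureReal_prod_union hs measurableSet_Ici (Iio_disjoint_Ici le_rfl), Iio_union_Ici]
  rw [measureReal_coverageRegion hneg hz 0, hband, hsplit measurableSet_Ici,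
    hsplit measurableSet_Iio, measureReal_swap_prod hswap measurableSet_Ici measurableSet_Iio,
    sub_zero, add_zero]
  ring

namespace IsRadiallyDecreasing

variable {E : Type*} [NormedAddCommGroup E] [InnerProductSpace ℝ E] [FiniteDimensional ℝ E]
  [MeasurableSpace E] [BorelSpace E] {μ : Measure E} [IsFiniteMeasure μ] {e f : E}

/- Up to the null line `p.2 = k`, the reflection in `p.1 + p.2 = 2 * k` maps the strip on the left
into the rectangle on the right, which lies on the same side of the mirror as the origin. -/
lemma measureReal_farStrip_le (hμ : IsRadiallyDecreasing μ) (hnorm : ‖e‖ = ‖f‖) (hef : e + f ≠ 0)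
    {k : ℝ} (hk : k ≤ 0) (δ : ℝ) :
    (μ.map (innerPair e f)).real (Ico k (k + δ) ×ˢ Iio (k - δ)) ≤
      (μ.map (innerPair e f)).real (Ici (k + δ) ×ˢ Ico (k - δ) k) := by
  have hf : f ≠ 0 := by
    rintro rfl
    simp [norm_eq_zero.1 (hnorm.trans norm_zero)] at hef
  have hpre : Ico k (k + δ) ×ˢ Iio (k - δ) ⊆
      antidiagonalReflection k ⁻¹' (Ioi (k + δ) ×ˢ Ioc (k - δ) k) := by
    rintro p ⟨⟨hp, hp'⟩, hpδ⟩
    simp only [antidiagonalReflection, mem_preimage, mem_prod, mem_Ioi, mem_Ioc, mem_Iio] at hpδ ⊢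
    exact ⟨by linarith, by linarith, by linarith⟩
  have hboundary : (Ioi (k + δ) ×ˢ Ioc (k - δ) k : Set (ℝ × ℝ)) ≤ᵐ[μ.map (innerPair e f)]
      Ici (k + δ) ×ˢ Ico (k - δ) k := by
    filter_upwards [hμ.ae_map_innerPair_snd_ne e hf k] with p hp
    rintro ⟨hp₁, hp₂⟩
    exact ⟨(mem_Ioi.1 hp₁).le, hp₂.1.le, lt_of_le_of_ne hp₂.2 hp⟩
  refine ENNReal.toReal_mono (measure_ne_top _ _) ?_
  calc μ.map (innerPair e f) (Ico k (k + δ) ×ˢ Iio (k - δ))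
    _ ≤ μ.map (innerPair e f)
          (antidiagonalReflection k ⁻¹' (Ioi (k + δ) ×ˢ Ioc (k - δ) k)) := measure_mono hpre
    _ ≤ μ.map (innerPair e f) (Ioi (k + δ) ×ˢ Ioc (k - δ) k) := by
      refine hμ.map_innerPair_preimage_antidiagonalReflection_le hnorm hef hk
        (measurableSet_Ioi.prod measurableSet_Ioc) ?_
      rintro p ⟨hp₁, hp₂, -⟩
      simp only [antidiagonalReflection, mem_Ioi] at hp₁ hp₂
      linarith
    _ ≤ μ.map (innerPair e f) (Ici (k + δ) ×ˢ Ico (k - δ) k) := measure_mono_ae hboundary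

lemma measureReal_strip_le (hμ : IsRadiallyDecreasing μ) (hnorm : ‖e‖ = ‖f‖) (hef : e + f ≠ 0)
    {k δ : ℝ} (hk : k ≤ 0) (hδ : 0 ≤ δ) :
    (μ.map (innerPair e f)).real (Iio k ×ˢ Ico k (k + δ)) ≤
      (μ.map (innerPair e f)).real (Ici k ×ˢ Ico (k - δ) k) := by
  set ν := μ.map (innerPair e f)
  have hswap : MeasurePreserving Prod.swap ν ν := hμ.measurePreserving_swap hnorm
  have hIio : Iio (k - δ) ∪ Ico (k - δ) k = Iio k := Iio_union_Ico_eq_Iio (by linarith)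
  have hIci : Ico k (k + δ) ∪ Ici (k + δ) = Ici k := Ico_union_Ici_eq_Ici (by linarith)
  calc ν.real (Iio k ×ˢ Ico k (k + δ))
    _ = ν.real (Ico k (k + δ) ×ˢ Iio k) :=
      measureReal_swap_prod hswap measurableSet_Iio measurableSet_Ico
    _ = ν.real (Ico k (k + δ) ×ˢ Iio (k - δ)) + ν.real (Ico k (k + δ) ×ˢ Ico (k - δ) k) := by
      rw [← hIio, measureReal_prod_union measurableSet_Ico measurableSet_Ico
        (Iio_disjoint_Ici le_rfl |>.mono_right Ico_subset_Ici_self)]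
    _ ≤ ν.real (Ici (k + δ) ×ˢ Ico (k - δ) k) + ν.real (Ico k (k + δ) ×ˢ Ico (k - δ) k) := by
      gcongr ?_ + _
      exact hμ.measureReal_farStrip_le hnorm hef hk δ
    _ = ν.real (Ici k ×ˢ Ico (k - δ) k) := by
      rw [add_comm, ← measureReal_union_prod measurableSet_Ici measurableSet_Ico
        (Iio_disjoint_Ici le_rfl |>.mono_left Ico_subset_Iio_self), hIci]

lemma measureReal_abs_le_le_coverageRegion (hμ : IsRadiallyDecreasing μ) (hnorm : ‖e‖ = ‖f‖)
    (hef : e + f ≠ 0) {z δ : ℝ} (hz : 0 ≤ z) (hδ : 0 ≤ δ) :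
    (μ.map (innerPair e f)).real {p | |p.1| ≤ z} ≤
      (μ.map (innerPair e f)).real (coverageRegion z δ) := by
  have hneg := hμ.measurePreserving_neg e f
  have hIci : Ico (-z - δ) (-z) ∪ Ici (-z) = Ici (-z - δ) := Ico_union_Ici_eq_Ici (by linarith)
  have hIio : Iio (-z) ∪ Ico (-z) (-z + δ) = Iio (-z + δ) := Iio_union_Ico_eq_Iio (by linarith)
  have hgain := hμ.measureReal_strip_le hnorm hef (neg_nonpos.2 hz) hδ
  rw [← measureReal_coverageRegion_zero (hμ.measurePreserving_swap hnorm) hneg hz,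
    measureReal_coverageRegion hneg hz, measureReal_coverageRegion hneg hz, sub_zero, add_zero,
    ← hIci, ← hIio,
    measureReal_prod_union measurableSet_Ici measurableSet_Ici
      (Iio_disjoint_Ici le_rfl |>.mono_left Ico_subset_Iio_self),
    measureReal_prod_union measurableSet_Iio measurableSet_Ico
      (Iio_disjoint_Ici le_rfl |>.mono_right Ico_subset_Ici_self)]
  linarith

end IsRadiallyDecreasing

end Coverage

section Gaussian

lemma gaussianPDF_mul_gaussianPDF (x y : ℝ) :
    gaussianPDF 0 1 x * gaussianPDF 0 1 y =
      ENNReal.ofReal ((√(2 * Real.pi))⁻¹ ^ 2 * Real.exp (-‖WithLp.toLp 2 (x, y)‖ ^ 2 / 2)) := by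
  rw [gaussianPDF, gaussianPDF, ← ENNReal.ofReal_mul (gaussianPDFReal_nonneg 0 1 _),
    WithLp.prod_norm_sq_eq_of_L2]
  simp only [gaussianPDFReal, NNReal.coe_one, mul_one, sub_zero, WithLp.toLp_fst, WithLp.toLp_snd,
    Real.norm_eq_abs, sq_abs]
  rw [mul_mul_mul_comm, ← Real.exp_add, ← sq]
  ring_nf

lemma isRadiallyDecreasing_gaussianReal_prod :
    IsRadiallyDecreasing (((gaussianReal 0 1).prod (gaussianReal 0 1)).map (WithLp.toLp 2)) := by
  let g (r : ℝ≥0) : ℝ≥0∞ :=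
    ENNReal.ofReal ((√(2 * Real.pi))⁻¹ ^ 2 * Real.exp (-(r : ℝ) ^ 2 / 2))
  have hg : Antitone g := by
    intro r s hrs
    dsimp only [g]
    gcongr
  have hmeas := WithLp.measurable_toLp 2 (ℝ × ℝ)
  refine ⟨g, hg, Measure.ext fun S hS ↦ ?_⟩
  rw [Measure.map_apply hmeas hS, withDensity_apply _ hS,
    gaussianReal_of_var_ne_zero 0 one_ne_zero,
    prod_withDensity (measurable_gaussianPDF 0 1) (measurable_gaussianPDF 0 1),
    withDensity_apply _ (hmeas hS), ← Measure.volume_eq_prod]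
  simp only [gaussianPDF_mul_gaussianPDF]
  exact (WithLp.volume_preserving_toLp ℝ ℝ).setLIntegral_comp_preimage hS
    (hg.measurable.comp measurable_nnnorm)

lemma stdNormalCDF_strictMono : StrictMono stdNormalCDF := by
  intro x y hxy
  have hpos : 0 < (gaussianReal 0 1).real (Ioc x y) := by
    refine ENNReal.toReal_pos (fun hnull ↦ ?_) (measure_ne_top _ _)
    have := gaussianReal_absolutelyContinuous' 0 one_ne_zero hnull
    simp [hxy.not_ge] at this
  have hsplit : stdNormalCDF y = stdNormalCDF x + (gaussianReal 0 1).real (Ioc x y) := by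
    change (gaussianReal 0 1).real (Iic y) = (gaussianReal 0 1).real (Iic x) + _
    rw [← measureReal_union (Iic_disjoint_Ioc le_rfl) measurableSet_Ioc,
      Iic_union_Ioc_eq_Iic hxy.le]
  linarith

lemma gaussianReal_real_abs_le {z : ℝ} (hz : 0 ≤ z) :
    (gaussianReal 0 1).real {x | |x| ≤ z} = 2 * stdNormalCDF z - 1 := by
  have hneg : MeasurePreserving Neg.neg (gaussianReal 0 1) (gaussianReal 0 1) :=
    ⟨measurable_neg, by simpa using gaussianReal_map_neg (μ := 0) (v := 1)⟩
  have hset : {x : ℝ | |x| ≤ z} = Iic z \ Iio (-z) := by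
    ext x
    simp [abs_le, and_comm]
  have htail : (gaussianReal 0 1).real (Iio (-z)) = 1 - stdNormalCDF z := by
    have hpre : Neg.neg ⁻¹' Ioi z = Iio (-z) := by
      ext x
      simp
    rw [← hpre, hneg.measureReal_preimage measurableSet_Ioi.nullMeasurableSet, ← compl_Iic,
      probReal_compl_eq_one_sub measurableSet_Iic]
    rfl
  rw [hset, measureReal_sdiff (Iio_subset_Iic (by linarith)) measurableSet_Iio, htail]
  change stdNormalCDF z - _ = _
  ring

lemma stdNormalCDF_zero : stdNormalCDF 0 = 1 / 2 := by
  have := nullSingletonClass_gaussianReal (μ := 0) one_ne_zero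
  have h := gaussianReal_real_abs_le le_rfl
  simp only [abs_nonpos_iff, ofPred_eq_eq_singleton, measureReal_def, measure_singleton,
    ENNReal.toReal_zero] at h
  linarith

lemma half_le_stdNormalCDF_iff {z : ℝ} : 1 / 2 ≤ stdNormalCDF z ↔ 0 ≤ z := by
  rw [← stdNormalCDF_zero, stdNormalCDF_strictMono.le_iff_le]

lemma gaussianReal_prod_real_abs_fst_le {α z : ℝ} (hα : α ≤ 1)
    (hz : stdNormalCDF z = 1 - α / 2) :
    ((gaussianReal 0 1).prod (gaussianReal 0 1)).real {θ | |θ.1| ≤ z} = 1 - α := by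
  have hset : {θ : ℝ × ℝ | |θ.1| ≤ z} = {x | |x| ≤ z} ×ˢ univ := by
    ext θ
    simp
  have hz₀ : 0 ≤ z := half_le_stdNormalCDF_iff.1 (by linarith)
  rw [hset, measureReal_prod_prod, probReal_univ, mul_one, gaussianReal_real_abs_le hz₀, hz]
  ring

end Gaussian

section Plane

lemma innerPair_toLp (a d : ℝ) (θ : ℝ × ℝ) :
    innerPair (WithLp.toLp 2 (1, 0)) (WithLp.toLp 2 (d, -a)) (WithLp.toLp 2 θ) =
      (θ.1, d * θ.1 - a * θ.2) := by
  simp only [innerPair, WithLp.prod_inner_apply, RCLike.inner_apply, Real.ringHom_apply]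
  ext <;> ring

lemma measureReal_map_innerPair_toLp (μ : Measure (ℝ × ℝ)) (a d : ℝ) {S : Set (ℝ × ℝ)}
    (hS : MeasurableSet S) :
    ((μ.map (WithLp.toLp 2)).map
        (innerPair (WithLp.toLp 2 (1, 0)) (WithLp.toLp 2 (d, -a)))).real S =
      μ.real {θ | (θ.1, d * θ.1 - a * θ.2) ∈ S} := by
  have hmeas := WithLp.measurable_toLp 2 (ℝ × ℝ)
  rw [map_measureReal_apply (measurable_innerPair _ _) hS,
    map_measureReal_apply hmeas (measurable_innerPair _ _ hS)]
  simp only [preimage, mem_ofPred_eq, innerPair_toLp]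

lemma mem_coverageRegion_iff {a d : ℝ} (hd : 0 < d) (b z : ℝ) (θ : ℝ × ℝ) :
    (θ.1, d * θ.1 - a * θ.2) ∈ coverageRegion z (-(a * d⁻¹ * b)) ↔
      max (a * d⁻¹ * (θ.2 + d⁻¹ * b) - d⁻¹ * z) (-z) ≤ θ.1 ∧
        θ.1 ≤ max (a * d⁻¹ * (θ.2 + d⁻¹ * b) + d⁻¹ * z) z := by
  have hlower : a * d⁻¹ * (θ.2 + d⁻¹ * b) - d⁻¹ * z = (a * θ.2 + a * d⁻¹ * b - z) / d := by
    field_simp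
  have hupper : a * d⁻¹ * (θ.2 + d⁻¹ * b) + d⁻¹ * z = (a * θ.2 + a * d⁻¹ * b + z) / d := by
    field_simp
  rw [max_le_iff, le_max_iff, hlower, hupper, div_le_iff₀ hd, le_div_iff₀ hd]
  simp only [coverageRegion, mem_sdiff, mem_prod, mem_Ici, mem_Ioi]
  grind

end Plane

theorem stmt11_general {μ : Measure (ℝ × ℝ)} [IsFiniteMeasure μ]
    (hμ : IsRadiallyDecreasing (μ.map (WithLp.toLp 2))) {a₁ a₂ b z : ℝ} (ha₂ : 0 < a₂)
    (ha : a₁ ^ 2 + a₂ ^ 2 = 1) (hb : a₁ * b ≤ 0) (hz : 0 ≤ z) :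
    μ.real {θ | |θ.1| ≤ z} ≤
      μ.real {θ | max (a₁ * a₂⁻¹ * (θ.2 + a₂⁻¹ * b) - a₂⁻¹ * z) (-z) ≤ θ.1 ∧
        θ.1 ≤ max (a₁ * a₂⁻¹ * (θ.2 + a₂⁻¹ * b) + a₂⁻¹ * z) z} ∧
    (b = 0 → μ.real {θ | max (a₁ * a₂⁻¹ * (θ.2 + a₂⁻¹ * b) - a₂⁻¹ * z) (-z) ≤ θ.1 ∧
        θ.1 ≤ max (a₁ * a₂⁻¹ * (θ.2 + a₂⁻¹ * b) + a₂⁻¹ * z) z} =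
      μ.real {θ | |θ.1| ≤ z}) := by
  set e : WithLp 2 (ℝ × ℝ) := WithLp.toLp 2 (1, 0)
  set f : WithLp 2 (ℝ × ℝ) := WithLp.toLp 2 (a₂, -a₁)
  have hnorm : ‖e‖ = ‖f‖ := by
    simp [e, f, WithLp.prod_norm_eq_of_L2, add_comm (a₂ ^ 2), ha]
  have hef : e + f ≠ 0 := fun h ↦ by
    have : 1 + a₂ = 0 := congrArg WithLp.fst h
    linarith
  have hδ : 0 ≤ -(a₁ * a₂⁻¹ * b) := by
    rw [mul_right_comm]
    exact neg_nonneg.2 (mul_nonpos_of_nonpos_of_nonneg hb (inv_nonneg.2 ha₂.le))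
  have hband := measureReal_map_innerPair_toLp μ a₁ a₂ (S := {p | |p.1| ≤ z})
    (measurableSet_le (by fun_prop) measurable_const)
  simp only [← mem_coverageRegion_iff ha₂,
    ← measureReal_map_innerPair_toLp μ a₁ a₂ (measurableSet_coverageRegion _ _)]
  refine ⟨hband.ge.trans (hμ.measureReal_abs_le_le_coverageRegion hnorm hef hz hδ), ?_⟩
  rintro rfl
  rw [mul_zero, neg_zero]
  exact (measureReal_coverageRegion_zero (hμ.measurePreserving_swap hnorm)
    (hμ.measurePreserving_neg e f) hz).trans hband

/-- Canonical finite-sample validity: for θ̂ ~ N(0, I₂) and b ≤ 0,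
P(LB(θ̂₂) ≤ θ̂₁ ≤ UB(θ̂₂)) ≥ 1 − α, with equality when b = 0. -/
theorem stmt11 (a₁ a₂ b α z : ℝ)
    (ha₁ : 0 < a₁) (ha₂ : 0 < a₂) (ha : a₁ ^ 2 + a₂ ^ 2 = 1)
    (hb : b ≤ 0) (hα : α ∈ Set.Icc (0:ℝ) 1) (hz : stdNormalCDF z = 1 - α / 2) :
    1 - α ≤ (((gaussianReal 0 1).prod (gaussianReal 0 1))
      {θ : ℝ × ℝ | max (a₁ * a₂⁻¹ * (θ.2 + a₂⁻¹ * b) - a₂⁻¹ * z) (-z) ≤ θ.1 ∧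
        θ.1 ≤ max (a₁ * a₂⁻¹ * (θ.2 + a₂⁻¹ * b) + a₂⁻¹ * z) z}).toReal ∧
    (b = 0 → (((gaussianReal 0 1).prod (gaussianReal 0 1))
      {θ : ℝ × ℝ | max (a₁ * a₂⁻¹ * (θ.2 + a₂⁻¹ * b) - a₂⁻¹ * z) (-z) ≤ θ.1 ∧
        θ.1 ≤ max (a₁ * a₂⁻¹ * (θ.2 + a₂⁻¹ * b) + a₂⁻¹ * z) z}).toReal = 1 - α) := by
  rw [← gaussianReal_prod_real_abs_fst_le hα.2 hz]
  exact stmt11_general isRadiallyDecreasing_gaussianReal_prod ha₂ ha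
    (mul_nonpos_of_nonneg_of_nonpos ha₁.le hb) (half_le_stdNormalCDF_iff.1 (by linarith [hα.2]))
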